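/- Let α and β be complex numbers with Re(α − 2β) > −2, β ≠ 1, and such that 1+α and 2+α−β are not nonpositive integers and none of the digamma values below is taken at a pole. Then ₃F₂(1, α, β; 1+α, 2+α−β; 1) = [α(1+α−β)/(β−1)]·[ψ(α) − ψ(2+α−2β) − ψ((α+1)/2) + ψ((α+3)/2 − β)]. -/

import Mathlib

/-- The ascending Pochhammer symbol `(x)_n`. -/
noncomputable def poch (x : ℂ) (n : ℕ) : ℂ := (ascPochhammer ℂ n).eval x

/-- The generalized hypergeometric series `₃F₂(a₁,a₂,a₃; b₁,b₂; 1)`. -/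
noncomputable def F32 (a1 a2 a3 b1 b2 : ℂ) : ℂ :=
  ∑' n : ℕ, poch a1 n * poch a2 n * poch a3 n / ((n.factorial : ℂ) * poch b1 n * poch b2 n)

/-- `z` is not a nonpositive integer (i.e. not a pole of `Γ` or `ψ`). -/
def NotPole (z : ℂ) : Prop := ∀ n : ℕ, z ≠ -(n : ℂ)

/-- The digamma function `ψ(z) = Γ'(z)/Γ(z)`. -/
noncomputable def digamma (z : ℂ) : ℂ := deriv Complex.Gamma z / Complex.Gamma z

/-!
Divide the series by `α` and write `x = 2 + α - 2β`. A telescoping sum relates the quotient at `α`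
to the one at `α + 1`. Applied twice, this relation shows that the quotient, times
`(β - 1) / (1 + α - β)`, satisfies the same recurrence under `α ↦ α + 2` as `B x - B α`, where `B`
is Nielsen's beta function. Along `α + 2ℕ` both vanish at infinity, so they agree.

The decay of `B` rests on `ψ (z + n) - log n → 0`. Gauss's approximations to `Γ`, divided by `Γ`,
tend to `1` and are locally bounded for `0 < re z`, so by Cauchy's formula their derivatives tend
to `0`; their logarithmic derivatives are `log n - ψ (z + n + 1)`.
-/

open Asymptotics Filter Metric Topology

theorem NotPole.add_natCast_ne_zero {z : ℂ} (hz : NotPole z) (n : ℕ) : z + n ≠ 0 :=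
  fun h => hz n (eq_neg_of_add_eq_zero_left h)

theorem NotPole.ne_zero {z : ℂ} (hz : NotPole z) : z ≠ 0 := by
  simpa using hz.add_natCast_ne_zero 0

theorem NotPole.add_natCast {z : ℂ} (hz : NotPole z) (n : ℕ) : NotPole (z + n) := fun m h =>
  hz (n + m) (by push_cast; linear_combination h)

theorem NotPole.add_one {z : ℂ} (hz : NotPole z) : NotPole (z + 1) := by
  simpa using hz.add_natCast 1

theorem NotPole.of_re_pos {z : ℂ} (hz : 0 < z.re) : NotPole z := fun n h => by
  have : z.re = -n := by simp [h]
  linarith [n.cast_nonneg (α := ℝ)]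

theorem poch_eq_prod (x : ℂ) (n : ℕ) : poch x n = ∏ j ∈ Finset.range n, (x + j) := by
  induction n with
  | zero => simp [poch]
  | succ n ih => rw [Finset.prod_range_succ, ← ih, poch, ascPochhammer_succ_eval, poch]

theorem poch_zero (x : ℂ) : poch x 0 = 1 := by simp [poch_eq_prod]

theorem poch_one_left (n : ℕ) : poch 1 n = n.factorial := ascPochhammer_eval_one ℂ n

theorem poch_succ (x : ℂ) (n : ℕ) : poch x (n + 1) = poch x n * (x + n) := by
  simp only [poch_eq_prod, Finset.prod_range_succ]

theorem poch_succ_left (x : ℂ) (n : ℕ) : poch x (n + 1) = x * poch (x + 1) n := by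
  simp only [poch_eq_prod, Finset.prod_range_succ', Nat.cast_add, Nat.cast_one, Nat.cast_zero,
    add_zero, add_assoc, add_comm (1 : ℂ), mul_comm x]

theorem poch_ne_zero {x : ℂ} (hx : NotPole x) (n : ℕ) : poch x n ≠ 0 := by
  rw [poch_eq_prod, Finset.prod_ne_zero_iff]
  exact fun j _ => hx.add_natCast_ne_zero j

theorem norm_poch_le_norm_poch {x y : ℂ} (h : ∀ j : ℕ, ‖x + j‖ ≤ ‖y + j‖) (n : ℕ) :
    ‖poch x n‖ ≤ ‖poch y n‖ := by
  simp only [poch_eq_prod, norm_prod]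
  exact Finset.prod_le_prod (fun _ _ => norm_nonneg _) fun j _ => h j

theorem GammaSeq_eq_div_poch (z : ℂ) (n : ℕ) :
    Complex.GammaSeq z n = (n : ℂ) ^ z * n.factorial / poch z (n + 1) := by
  rw [Complex.GammaSeq, poch_eq_prod]

theorem tendsto_inv_GammaSeq (z : ℂ) :
    Tendsto (fun n => (Complex.GammaSeq z n)⁻¹) atTop (𝓝 (Complex.Gamma z)⁻¹) := by
  by_cases hz : NotPole z
  · exact (Complex.GammaSeq_tendsto_Gamma z).inv₀ (Complex.Gamma_ne_zero hz)
  obtain ⟨m, rfl⟩ : ∃ m : ℕ, z = -m := by simpa [NotPole] using hz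
  rw [Complex.Gamma_neg_nat_eq_zero, inv_zero]
  refine tendsto_const_nhds.congr' ?_
  filter_upwards [eventually_ge_atTop m] with n hn
  have : poch (-m : ℂ) (n + 1) = 0 := by
    rw [poch_eq_prod]
    exact Finset.prod_eq_zero (Finset.mem_range.2 (Nat.lt_succ_of_le hn)) (neg_add_cancel _)
  rw [GammaSeq_eq_div_poch, this, div_zero, inv_zero]

theorem isTheta_add_natCast (a : ℂ) :
    (fun n : ℕ => a + n) =Θ[atTop] (fun n : ℕ => (n : ℝ)) := by
  have h : (fun _ : ℕ => a) =o[atTop] (fun n : ℕ => (n : ℂ)) :=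
    isLittleO_const_left.2 <| .inr <| by
      simpa [Function.comp_def] using tendsto_natCast_atTop_atTop (R := ℝ)
  exact h.right_isTheta_add.symm.trans (.of_norm_eventuallyEq_norm (by simp))

theorem eventually_add_natCast_ne_zero (a : ℂ) : ∀ᶠ n : ℕ in atTop, a + n ≠ 0 := by
  filter_upwards [(isTheta_add_natCast a).eq_zero_iff, eventually_ne_atTop 0] with n hiff hn
  exact fun h => hn (Nat.cast_eq_zero.1 (hiff.1 h))

theorem tendsto_inv_add_natCast (a : ℂ) :
    Tendsto (fun n : ℕ => (a + n)⁻¹) atTop (𝓝 0) :=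
  (isTheta_add_natCast a).inv.isBigO.trans_tendsto tendsto_inv_atTop_nhds_zero_nat

theorem poch_succ_div_poch_succ_isBigO (b c : ℂ) :
    (fun n => poch b (n + 1) / poch c (n + 1)) =O[atTop]
      (fun n : ℕ => (n : ℝ) ^ (b - c).re) := by
  have hpow : (fun n : ℕ => (n : ℂ) ^ (b - c)) =O[atTop] (fun n : ℕ => (n : ℝ) ^ (b - c).re) := by
    refine (IsTheta.of_norm_eventuallyEq ?_).isBigO
    filter_upwards [eventually_gt_atTop 0] with n hn
    rw [Complex.norm_natCast_cpow_of_pos hn]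
  have hseq := ((Complex.GammaSeq_tendsto_Gamma c).mul (tendsto_inv_GammaSeq b)).isBigO_one ℝ
  refine (hpow.mul hseq).congr' ?_ (by simp)
  filter_upwards [eventually_ne_atTop 0] with n hn
  have hn' : (n : ℂ) ≠ 0 := Nat.cast_ne_zero.2 hn
  have hpow_ne (a : ℂ) : (n : ℂ) ^ a ≠ 0 := by simp [Complex.cpow_eq_zero_iff, hn']
  have hb := hpow_ne b
  have hc := hpow_ne c
  have hfac : (n.factorial : ℂ) ≠ 0 := Nat.cast_ne_zero.2 n.factorial_ne_zero
  rw [GammaSeq_eq_div_poch, GammaSeq_eq_div_poch, inv_div, Complex.cpow_sub _ _ hn']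
  field_simp

theorem poch_div_poch_isBigO (b c : ℂ) :
    (fun n => poch b n / poch c n) =O[atTop] (fun n : ℕ => (n : ℝ) ^ (b - c).re) := by
  have hratio := ((isTheta_add_natCast c).div (isTheta_add_natCast b)).isBigO
  refine ((poch_succ_div_poch_succ_isBigO b c).mul hratio).congr' ?_ ?_
  · filter_upwards [eventually_add_natCast_ne_zero b, eventually_add_natCast_ne_zero c]
      with n hb hc
    rw [poch_succ, poch_succ]
    field_simp
  · filter_upwards [eventually_ne_atTop 0] with n hn
    rw [div_self (Nat.cast_ne_zero.2 hn), mul_one]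

theorem tendsto_deriv_of_norm_le_sphere {ι E : Type*} [NormedAddCommGroup E] [NormedSpace ℂ E]
    [CompleteSpace E] {l : Filter ι} [l.IsCountablyGenerated] {f : ι → ℂ → E} {g : ℂ → E} {c : ℂ}
    {R C : ℝ} (hR : 0 < R) (hf : ∀ᶠ n in l, DiffContOnCl ℂ (f n) (ball c R))
    (hg : DiffContOnCl ℂ g (ball c R)) (hbound : ∀ᶠ n in l, ∀ z ∈ sphere c R, ‖f n z‖ ≤ C)
    (hlim : ∀ z ∈ sphere c R, Tendsto (fun n => f n z) l (𝓝 (g z))) :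
    Tendsto (fun n => deriv (f n) c) l (𝓝 (deriv g c)) := by
  have hcauchy {h : ℂ → E} (hh : DiffContOnCl ℂ h (ball c R)) :
      (2 * Real.pi * Complex.I)⁻¹ • ∮ z in C(c, R), (1 / (z - c) ^ 2) • h z = deriv h c := by
    rw [hh.deriv_eq_smul_circleIntegral hR, inv_smul_smul₀ Complex.two_pi_I_ne_zero]
  rw [← hcauchy hg]
  refine (Tendsto.const_smul ?_ _).congr' (hf.mono fun n hn => hcauchy hn)
  have hmem (θ : ℝ) : circleMap c R θ ∈ sphere c R := circleMap_mem_sphere c hR.le θ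
  refine intervalIntegral.tendsto_integral_filter_of_dominated_convergence
    (fun _ => R * (1 / R ^ 2 * C)) ?_ ?_ intervalIntegrable_const ?_
  · filter_upwards [hf] with n hn
    have hinv : ContinuousOn (fun z => 1 / (z - c) ^ 2) (sphere c R) :=
      continuousOn_const.div (by fun_prop) fun z hz =>
        pow_ne_zero 2 (sub_ne_zero.2 (ne_of_mem_sphere hz hR.ne'))
    exact ((hinv.smul (hn.continuousOn_ball.mono sphere_subset_closedBall)).circleIntegrable
      hR.le).out.def'.aestronglyMeasurable
  · filter_upwards [hbound] with n hn
    refine .of_forall fun θ _ => ?_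
    have hnorm : ‖circleMap c R θ - c‖ = R := mem_sphere_iff_norm.1 (hmem θ)
    have hderiv : ‖deriv (circleMap c R) θ‖ = R := by simp [deriv_circleMap, abs_of_pos hR]
    rw [norm_smul, norm_smul, norm_div, norm_one, norm_pow, hnorm, hderiv]
    gcongr
    exact hn _ (hmem θ)
  · exact .of_forall fun θ _ => ((hlim _ (hmem θ)).const_smul _).const_smul _

/-- Gauss's approximation `n! n ^ z / (z (z + 1) ⋯ (z + n))` of `Γ z`, divided by `Γ z`. Written
with `Γ (z + n + 1)`, which is `0` by convention at its poles, it is entire in `z` for `n ≠ 0`. -/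
noncomputable def gaussRatio (n : ℕ) (z : ℂ) : ℂ :=
  (n : ℂ) ^ z * n.factorial / Complex.Gamma (z + n + 1)

theorem gaussRatio_eq_GammaSeq_div_Gamma {z : ℂ} (hz : NotPole z) (n : ℕ) :
    gaussRatio n z = Complex.GammaSeq z n / Complex.Gamma z := by
  have hΓ := Complex.Gamma_ne_zero hz
  have hpoch : Complex.Gamma (z + n + 1) / Complex.Gamma z = poch z (n + 1) := by
    simpa only [poch, Nat.cast_succ, ← add_assoc] using
      Complex.Gamma_add_nat_div_Gamma_eq (n := n + 1) z hz
  rw [GammaSeq_eq_div_poch, ← hpoch, gaussRatio]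
  field_simp

theorem differentiable_gaussRatio {n : ℕ} (hn : n ≠ 0) : Differentiable ℂ (gaussRatio n) := by
  have hn' : (n : ℂ) ≠ 0 := Nat.cast_ne_zero.2 hn
  have hshift : Differentiable ℂ fun z : ℂ => z + n + 1 := by fun_prop
  have hΓ : Differentiable ℂ fun z : ℂ => (Complex.Gamma (z + n + 1))⁻¹ :=
    Complex.differentiable_one_div_Gamma.comp hshift
  exact ((differentiable_id.const_cpow (.inl hn')).mul_const _).mul hΓ

theorem tendsto_gaussRatio {z : ℂ} (hz : NotPole z) :
    Tendsto (fun n => gaussRatio n z) atTop (𝓝 1) := by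
  simp only [gaussRatio_eq_GammaSeq_div_Gamma hz]
  rw [← div_self (Complex.Gamma_ne_zero hz)]
  exact (Complex.GammaSeq_tendsto_Gamma z).div_const _

theorem realGammaSeq_le_Gamma {x : ℝ} (hx : 0 < x) {n : ℕ} (hn : n ≠ 0) :
    Real.GammaSeq x n ≤ Real.Gamma x := by
  have hn' : (0 : ℝ) < n := Nat.cast_pos.2 (Nat.pos_of_ne_zero hn)
  have hfactor (j : ℕ) : 0 < x + j := by positivity
  have hpos : 0 < Real.GammaSeq x n := by
    have := Finset.prod_pos fun j (_ : j ∈ Finset.range (n + 1)) => hfactor j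
    unfold Real.GammaSeq
    positivity
  rw [← Real.log_le_log_iff hpos (Real.Gamma_pos_of_pos hx)]
  have hlog : Real.log (Real.GammaSeq x n) = Real.BohrMollerup.logGammaSeq x n := by
    have hprod : ∏ j ∈ Finset.range (n + 1), (x + j) ≠ 0 :=
      Finset.prod_ne_zero_iff.2 fun j _ => (hfactor j).ne'
    rw [Real.GammaSeq, Real.log_div (by positivity) hprod, Real.log_mul (by positivity)
      (by positivity), Real.log_rpow hn', Real.log_prod fun j _ => (hfactor j).ne',
      Real.BohrMollerup.logGammaSeq]
  have hge := Real.BohrMollerup.ge_logGammaSeq Real.convexOn_log_Gamma (fun {y} hy => by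
    rw [Function.comp_apply, Function.comp_apply, Real.Gamma_add_one hy.ne',
      Real.log_mul hy.ne' (Real.Gamma_pos_of_pos hy).ne', add_comm]) hx hn
  simpa [hlog] using hge

theorem norm_GammaSeq_le {z : ℂ} (hz : 0 < z.re) (n : ℕ) :
    ‖Complex.GammaSeq z n‖ ≤ Real.GammaSeq z.re n := by
  rw [Complex.GammaSeq, Real.GammaSeq, norm_div, norm_mul, norm_prod,
    Complex.norm_natCast_cpow_of_re_ne_zero n hz.ne', Complex.norm_natCast]
  gcongr with j
  simpa using Complex.re_le_norm (z + j)

theorem logDeriv_gaussRatio {z : ℂ} (hz : NotPole z) {n : ℕ} (hn : n ≠ 0) :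
    logDeriv (gaussRatio n) z = Complex.log n - digamma (z + n + 1) := by
  have hn' : (n : ℂ) ≠ 0 := Nat.cast_ne_zero.2 hn
  have hpole : NotPole (z + (n + 1)) := by simpa only [add_assoc] using (hz.add_natCast n).add_one
  have hfac : (n.factorial : ℂ) ≠ 0 := Nat.cast_ne_zero.2 n.factorial_ne_zero
  have hne : (n : ℂ) ^ z ≠ 0 := by simp [Complex.cpow_eq_zero_iff, hn']
  have hpow : HasDerivAt (fun w : ℂ => (n : ℂ) ^ w) ((n : ℂ) ^ z * Complex.log n) z := by
    simpa using (hasDerivAt_id z).const_cpow (c := (n : ℂ)) (.inl hn')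
  have hΓ : HasDerivAt (fun w : ℂ => Complex.Gamma (w + (n + 1)))
      (deriv Complex.Gamma (z + (n + 1))) z :=
    (Complex.differentiableAt_Gamma _ hpole).hasDerivAt.comp_add_const z _
  calc
    logDeriv (gaussRatio n) z
        = logDeriv (fun w => (n : ℂ) ^ w * n.factorial / Complex.Gamma (w + (n + 1))) z := by
      simp only [← add_assoc]; rfl
    _ = logDeriv (fun w => (n : ℂ) ^ w) z - logDeriv (fun w => Complex.Gamma (w + (n + 1))) z := by
      rw [logDeriv_div (f := fun w => (n : ℂ) ^ w * n.factorial) z (mul_ne_zero hne hfac)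
        (Complex.Gamma_ne_zero (s := z + (n + 1)) hpole) (hpow.differentiableAt.mul_const _)
        hΓ.differentiableAt, logDeriv_mul_const z _ hfac]
    _ = Complex.log n - digamma (z + n + 1) := by
      rw [logDeriv_apply, logDeriv_apply, hpow.deriv, hΓ.deriv, mul_div_cancel_left₀ _ hne,
        add_assoc, digamma]

theorem tendsto_deriv_gaussRatio {z : ℂ} (hz : 0 < z.re) :
    Tendsto (fun n => deriv (gaussRatio n) z) atTop (𝓝 0) := by
  have hpos {w : ℂ} (hw : w ∈ closedBall z (z.re / 2)) : 0 < w.re := by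
    have := (Complex.abs_re_le_norm (w - z)).trans (mem_closedBall_iff_norm.1 hw)
    rw [Complex.sub_re, abs_le] at this
    linarith
  have hcont : ContinuousOn (fun w : ℂ => Real.Gamma w.re / ‖Complex.Gamma w‖)
      (closedBall z (z.re / 2)) := fun w hw => by
    have hw' := NotPole.of_re_pos (hpos hw)
    have hpole (m : ℕ) : w.re ≠ -m := by linarith [hpos hw, m.cast_nonneg (α := ℝ)]
    have hre : ContinuousAt (fun w : ℂ => Real.Gamma w.re) w :=
      (Real.differentiableAt_Gamma hpole).continuousAt.comp Complex.continuous_re.continuousAt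
    exact (hre.div (Complex.differentiableAt_Gamma w hw').continuousAt.norm
      (norm_ne_zero_iff.2 (Complex.Gamma_ne_zero hw'))).continuousWithinAt
  obtain ⟨C, hC⟩ := (isCompact_closedBall z (z.re / 2)).exists_bound_of_continuousOn hcont
  rw [← deriv_const z (1 : ℂ)]
  refine tendsto_deriv_of_norm_le_sphere (half_pos hz) (C := C) ?_ diffContOnCl_const ?_
    fun w hw => tendsto_gaussRatio (.of_re_pos (hpos (sphere_subset_closedBall hw)))
  · filter_upwards [eventually_ne_atTop 0] with n hn
    exact (differentiable_gaussRatio hn).diffContOnCl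
  · filter_upwards [eventually_ne_atTop 0] with n hn w hw
    have hw := sphere_subset_closedBall hw
    refine le_trans ?_ ((le_abs_self _).trans (hC w hw))
    rw [gaussRatio_eq_GammaSeq_div_Gamma (.of_re_pos (hpos hw)), norm_div]
    gcongr
    exact (norm_GammaSeq_le (hpos hw) n).trans (realGammaSeq_le_Gamma (hpos hw) hn)

theorem tendsto_digamma_add_succ_sub_log {z : ℂ} (hz : 0 < z.re) :
    Tendsto (fun n : ℕ => digamma (z + n + 1) - Complex.log n) atTop (𝓝 0) := by
  have hlog := (tendsto_deriv_gaussRatio hz).div (tendsto_gaussRatio (.of_re_pos hz)) one_ne_zero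
  rw [zero_div, ← tendsto_neg_iff, neg_zero] at hlog
  refine hlog.congr' ?_
  filter_upwards [eventually_ne_atTop 0] with n hn
  rw [Pi.div_apply, ← logDeriv_apply, logDeriv_gaussRatio (.of_re_pos hz) hn, neg_sub]

theorem tendsto_log_natCast_add_sub_log (m : ℕ) :
    Tendsto (fun n : ℕ => Complex.log (n + m : ℕ) - Complex.log n) atTop (𝓝 0) := by
  have h := (Real.tendsto_log_comp_add_sub_log (m : ℝ)).comp tendsto_natCast_atTop_atTop
  simpa [Function.comp_def, ← Nat.cast_add, Complex.natCast_log] using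
    (Complex.continuous_ofReal.tendsto 0).comp h

theorem tendsto_digamma_add_natCast_sub_log (z : ℂ) :
    Tendsto (fun n : ℕ => digamma (z + n) - Complex.log n) atTop (𝓝 0) := by
  obtain ⟨m, hm⟩ := exists_nat_gt (-z.re)
  have hre : 0 < (z + m).re := by
    rw [Complex.add_re, Complex.natCast_re]
    linarith
  rw [← tendsto_add_atTop_iff_nat (m + 1)]
  have h := (tendsto_digamma_add_succ_sub_log hre).sub (tendsto_log_natCast_add_sub_log (m + 1))
  rw [sub_zero] at h
  refine h.congr fun n => ?_
  rw [sub_sub_sub_cancel_right]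
  congr 2
  push_cast
  ring

theorem digamma_add_one {z : ℂ} (hz : NotPole z) : digamma (z + 1) = digamma z + z⁻¹ :=
  Complex.digamma_apply_add_one z hz

/-- Nielsen's beta function `∑ (-1) ^ k / (x + k)`. The duplication formula for `ψ` turns its usual
expression `(ψ ((x + 1) / 2) - ψ (x / 2)) / 2` into this one. -/
noncomputable def nielsenBeta (x : ℂ) : ℂ := digamma ((x + 1) / 2) - digamma x + Complex.log 2

theorem nielsenBeta_eq_add_nielsenBeta_add_two {x : ℂ} (hx : NotPole x) :
    nielsenBeta x = 1 / x - 1 / (x + 1) + nielsenBeta (x + 2) := by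
  have hhalf : NotPole ((x + 1) / 2) := fun n h =>
    hx (2 * n + 1) (by push_cast; linear_combination 2 * h)
  have hx0 := hx.ne_zero
  have hx1 := hx.add_one.ne_zero
  have hshift : (x + 2 + 1) / 2 = (x + 1) / 2 + 1 := by ring
  have hshift' : x + 2 = x + 1 + 1 := by ring
  rw [nielsenBeta, nielsenBeta, hshift, digamma_add_one hhalf, hshift',
    digamma_add_one hx.add_one, digamma_add_one hx]
  field_simp
  ring

theorem tendsto_nielsenBeta_add_two_mul (x : ℂ) :
    Tendsto (fun n : ℕ => nielsenBeta (x + 2 * n)) atTop (𝓝 0) := by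
  have hdouble : Tendsto (fun n : ℕ => 2 * n) atTop atTop :=
    tendsto_id.const_mul_atTop' two_pos
  have h := (tendsto_digamma_add_natCast_sub_log ((x + 1) / 2)).sub
    ((tendsto_digamma_add_natCast_sub_log x).comp hdouble)
  rw [sub_zero] at h
  refine h.congr' ?_
  filter_upwards [eventually_gt_atTop 0] with n hn
  have hlog : Complex.log (2 * n) = Complex.log 2 + Complex.log n := by
    simpa using Complex.log_ofReal_mul two_pos (Nat.cast_ne_zero (R := ℂ).2 hn.ne')
  have hhalf : (x + 2 * n + 1) / 2 = (x + 1) / 2 + n := by ring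
  simp only [Function.comp_apply, nielsenBeta, Nat.cast_mul, Nat.cast_ofNat, hlog, hhalf]
  ring

/-- The series `₃F₂(1, a, b; 1 + a, c; 1) / a`, in which `(a)_n / (1 + a)_n = a / (a + n)`. -/
noncomputable def reducedF32 (a b c : ℂ) : ℂ := ∑' n : ℕ, poch b n / ((a + n) * poch c n)

theorem F32_one_self_add_one {a : ℂ} (ha : NotPole a) (b c : ℂ) :
    F32 1 a b (1 + a) c = a * reducedF32 a b c := by
  rw [F32, reducedF32, ← tsum_mul_left]
  refine tsum_congr fun n => ?_
  have hpoch : poch a n * (a + n) = a * poch (1 + a) n := by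
    rw [← poch_succ, poch_succ_left, add_comm]
  have hfac : (n.factorial : ℂ) ≠ 0 := Nat.cast_ne_zero.2 n.factorial_ne_zero
  have han := ha.add_natCast_ne_zero n
  have ha1 : poch (1 + a) n ≠ 0 := poch_ne_zero (add_comm a 1 ▸ ha.add_one) n
  calc
    poch 1 n * poch a n * poch b n / (n.factorial * poch (1 + a) n * poch c n)
        = poch a n / poch (1 + a) n * (poch b n / poch c n) := by
      rw [poch_one_left, mul_assoc, mul_assoc, mul_div_mul_left _ _ hfac, mul_div_mul_comm]
    _ = a / (a + n) * (poch b n / poch c n) := by rw [(div_eq_div_iff ha1 han).2 hpoch]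
    _ = a * (poch b n / ((a + n) * poch c n)) := by rw [div_mul_div_comm, mul_div_assoc]

theorem tendsto_poch_div_poch {b c : ℂ} (h : 0 < (c - b).re) :
    Tendsto (fun n => poch b n / poch c n) atTop (𝓝 0) := by
  have hexp : (b - c).re = -(c - b).re := by rw [← Complex.neg_re, neg_sub]
  have hO := poch_div_poch_isBigO b c
  rw [hexp] at hO
  exact hO.trans_tendsto ((tendsto_rpow_neg_atTop h).comp tendsto_natCast_atTop_atTop)

theorem summable_poch_div_poch {b c : ℂ} (h : 1 < (c - b).re) :
    Summable fun n => poch b n / poch c n := by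
  refine summable_of_isBigO_nat (Real.summable_nat_rpow.2 ?_) (poch_div_poch_isBigO b c)
  simp only [Complex.sub_re] at h ⊢
  linarith

theorem summable_reducedF32 (a : ℂ) {b c : ℂ} (h : 0 < (c - b).re) :
    Summable fun n : ℕ => poch b n / ((a + n) * poch c n) := by
  have hexp : (b - c).re - 1 < -1 := by
    simp only [Complex.sub_re] at h ⊢
    linarith
  refine summable_of_isBigO_nat (Real.summable_nat_rpow.2 hexp) ?_
  refine ((poch_div_poch_isBigO b c).mul (isTheta_add_natCast a).inv.isBigO).congr' ?_ ?_
  · exact .of_forall fun n => by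
      dsimp only
      rw [← div_eq_mul_inv, div_div, mul_comm]
  · filter_upwards [eventually_gt_atTop 0] with n hn
    rw [Real.rpow_sub_one (by positivity), div_eq_mul_inv]

theorem norm_ofReal_add_natCast {r : ℝ} (hr : 0 ≤ r) (j : ℕ) : ‖(r : ℂ) + j‖ = r + j := by
  rw [← Complex.ofReal_natCast, ← Complex.ofReal_add, Complex.norm_of_nonneg (by positivity)]

theorem reducedF32_add_natCast_isBigO_one (a b c : ℂ) :
    (fun m : ℕ => reducedF32 (a + m) b (c + m)) =O[atTop] (1 : ℕ → ℝ) := by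
  have hsum : Summable fun n => ‖poch ‖b‖ n / poch (‖b‖ + 2 : ℝ) n‖ :=
    (summable_poch_div_poch (by simp)).norm
  refine .of_bound (∑' n, ‖poch ‖b‖ n / poch (‖b‖ + 2 : ℝ) n‖) ?_
  have hlarge := (tendsto_natCast_atTop_atTop (R := ℝ)).eventually_ge_atTop
  filter_upwards [hlarge (1 - a.re), hlarge (‖b‖ + 2 - c.re)] with m ha hc
  rw [Pi.one_apply, norm_one, mul_one]
  refine tsum_of_norm_bounded hsum.hasSum fun n => ?_
  have hden : 1 ≤ ‖a + m + n‖ := by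
    refine le_trans ?_ (Complex.re_le_norm _)
    simp only [Complex.add_re, Complex.natCast_re]
    linarith [n.cast_nonneg (α := ℝ)]
  have hb : ‖poch b n‖ ≤ ‖poch ‖b‖ n‖ := norm_poch_le_norm_poch (fun j => by
    simpa [norm_ofReal_add_natCast] using norm_add_le b j) n
  have hc : ‖poch (‖b‖ + 2 : ℝ) n‖ ≤ ‖poch (c + m) n‖ := norm_poch_le_norm_poch (fun j => by
    rw [norm_ofReal_add_natCast (by positivity)]
    refine le_trans ?_ (Complex.re_le_norm _)
    simp only [Complex.add_re, Complex.natCast_re]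
    linarith) n
  have hpos : 0 < ‖poch (‖b‖ + 2 : ℝ) n‖ :=
    norm_pos_iff.2 (poch_ne_zero (.of_re_pos (by rw [Complex.ofReal_re]; positivity)) n)
  rw [norm_div, norm_div, norm_mul]
  gcongr
  exact hc.trans (le_mul_of_one_le_left (norm_nonneg _) hden)

theorem poch_add_one_eq_div {c : ℂ} (hc : NotPole c) (n : ℕ) :
    poch (c + 1) n = poch c n * (c + n) / c := by
  rw [eq_div_iff hc.ne_zero, ← poch_succ, poch_succ_left, mul_comm]

section WellPoised

variable {α β : ℂ}

theorem reducedF32_summand_telescope (hα : NotPole α) (hc : NotPole (2 + α - β))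
    (hx : 2 + α - 2 * β ≠ 0) (n : ℕ) :
    poch β n / ((α + n) * poch (2 + α - β) n) + (1 + α - β) / (2 + α - β) *
        (poch β n / ((α + 1 + n) * poch (2 + α - β + 1) n)) =
      poch β n / poch (2 + α - β) n * (1 / (2 + α - 2 * β) + 1 / (α + n)) -
        poch β (n + 1) / poch (2 + α - β) (n + 1) *
          (1 / (2 + α - 2 * β) + 1 / (α + (n + 1 : ℕ))) := by
  have hαn := hα.add_natCast_ne_zero n
  have hαn' := hα.add_one.add_natCast_ne_zero n
  have hc0 := hc.ne_zero
  have hcn := hc.add_natCast_ne_zero n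
  have hpoch := poch_ne_zero hc n
  have hα_succ : α + (n + 1 : ℕ) = α + 1 + n := by
    push_cast
    ring
  rw [poch_add_one_eq_div hc, poch_succ, poch_succ, hα_succ]
  field_simp
  ring

theorem reducedF32_add_reducedF32_add_one (hα : NotPole α) (hc : NotPole (2 + α - β))
    (hx : 0 < (2 + α - 2 * β).re) :
    reducedF32 α β (2 + α - β) +
        (1 + α - β) / (2 + α - β) * reducedF32 (α + 1) β (2 + α - β + 1) =
      1 / (2 + α - 2 * β) + 1 / α := by
  have hre : 0 < (2 + α - β - β).re := by rwa [sub_sub, ← two_mul]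
  have hre' : 0 < (2 + α - β + 1 - β).re := by
    simp only [Complex.sub_re, Complex.add_re, Complex.one_re] at hre ⊢
    linarith
  have hS := summable_reducedF32 α hre
  have hS' := (summable_reducedF32 (α + 1) hre').mul_left ((1 + α - β) / (2 + α - β))
  have hlim := ((tendsto_poch_div_poch hre).mul
    ((tendsto_inv_add_natCast α).const_add (1 / (2 + α - 2 * β))))
  rw [zero_mul] at hlim
  simp only [← one_div] at hlim
  rw [reducedF32, reducedF32, ← tsum_mul_left, ← hS.tsum_add hS']
  refine tendsto_nhds_unique (hS.add hS').hasSum.tendsto_sum_nat ?_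
  simp only [reducedF32_summand_telescope hα hc (NotPole.of_re_pos hx).ne_zero,
    Finset.sum_range_sub']
  simpa [poch_zero] using hlim.const_sub (1 / (2 + α - 2 * β) + 1 / α)

theorem sub_one_mul_reducedF32 (hα : NotPole α) (hc : NotPole (2 + α - β))
    (hx : 0 < (2 + α - 2 * β).re) :
    (β - 1) * reducedF32 α β (2 + α - β) = (1 + α - β) * (1 / (2 + α - 2 * β) - 1 / α -
      (β - 1) / (1 + (α + 1) - β) * reducedF32 (α + 1) β (2 + (α + 1) - β)) := by
  have hα0 := hα.ne_zero
  have hx0 := (NotPole.of_re_pos hx).ne_zero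
  have hsymm : (β - 1) * (1 / (2 + α - 2 * β) + 1 / α) =
      (1 + α - β) * (1 / (2 + α - 2 * β) - 1 / α) := by
    rw [div_add_div _ _ hx0 hα0, div_sub_div _ _ hx0 hα0]
    ring
  have hc_succ : 2 + (α + 1) - β = 2 + α - β + 1 := by ring
  have hd_succ : 1 + (α + 1) - β = 2 + α - β := by ring
  rw [hc_succ, hd_succ, eq_sub_of_add_eq (reducedF32_add_reducedF32_add_one hα hc hx)]
  linear_combination hsymm

/-- The difference of the two sides of the summation formula, both divided by
`α (1 + α - β) / (β - 1)`. -/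
noncomputable def summationDefect (α β : ℂ) : ℂ :=
  (β - 1) / (1 + α - β) * reducedF32 α β (2 + α - β) -
    (nielsenBeta (2 + α - 2 * β) - nielsenBeta α)

theorem re_parametricExcess_add_natCast_pos (hx : 0 < (2 + α - 2 * β).re) (n : ℕ) :
    0 < (2 + (α + n) - 2 * β).re := by
  rw [show 2 + (α + n) - 2 * β = 2 + α - 2 * β + n by ring, Complex.add_re, Complex.natCast_re]
  positivity

theorem sub_one_mul_reducedF32_eq_add_summationDefect (hα : NotPole α)
    (hc : NotPole (2 + α - β)) (hx : 0 < (2 + α - 2 * β).re) :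
    (β - 1) * reducedF32 α β (2 + α - β) = (1 + α - β) *
      (nielsenBeta (2 + α - 2 * β) - nielsenBeta α + summationDefect (α + 2) β) := by
  have hx' : 0 < (2 + (α + 1) - 2 * β).re := by
    simpa using re_parametricExcess_add_natCast_pos hx 1
  have hc' : NotPole (2 + (α + 1) - β) := by
    rw [show 2 + (α + 1) - β = 2 + α - β + 1 by ring]
    exact hc.add_one
  have hd : 1 + (α + 1) - β ≠ 0 := by
    rw [show 1 + (α + 1) - β = 2 + α - β by ring]
    exact hc.ne_zero
  have hα2 : α + 2 = α + 1 + 1 := by ring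
  have hx2 : 2 + α - 2 * β + 2 = 2 + (α + 1 + 1) - 2 * β := by ring
  rw [sub_one_mul_reducedF32 hα hc hx, div_mul_eq_mul_div,
    sub_one_mul_reducedF32 hα.add_one hc' hx', mul_div_cancel_left₀ _ hd,
    nielsenBeta_eq_add_nielsenBeta_add_two (NotPole.of_re_pos hx),
    nielsenBeta_eq_add_nielsenBeta_add_two hα, summationDefect, hα2, hx2]
  ring

theorem summationDefect_add_two (hα : NotPole α) (hd : NotPole (1 + α - β))
    (hx : 0 < (2 + α - 2 * β).re) : summationDefect α β = summationDefect (α + 2) β := by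
  have hc : NotPole (2 + α - β) := by
    rw [show 2 + α - β = 1 + α - β + 1 by ring]
    exact hd.add_one
  rw [summationDefect, div_mul_eq_mul_div,
    sub_one_mul_reducedF32_eq_add_summationDefect hα hc hx, mul_div_cancel_left₀ _ hd.ne_zero]
  ring

theorem tendsto_summationDefect_add_two_mul (α β : ℂ) :
    Tendsto (fun n : ℕ => summationDefect (α + 2 * n) β) atTop (𝓝 0) := by
  have hdouble : Tendsto (fun n : ℕ => 2 * n) atTop atTop := tendsto_id.const_mul_atTop' two_pos
  have hratio : Tendsto (fun n : ℕ => (β - 1) * (1 + α - β + n)⁻¹) atTop (𝓝 0) := by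
    simpa using (tendsto_inv_add_natCast (1 + α - β)).const_mul (β - 1)
  have hseries := ((isLittleO_one_iff ℝ).2 hratio).mul_isBigO
    (reducedF32_add_natCast_isBigO_one α β (2 + α - β))
  simp only [Pi.one_apply, mul_one] at hseries
  have h := (((isLittleO_one_iff ℝ).1 hseries).comp hdouble).sub
    ((tendsto_nielsenBeta_add_two_mul (2 + α - 2 * β)).sub (tendsto_nielsenBeta_add_two_mul α))
  rw [sub_zero, sub_zero] at h
  refine h.congr fun n => ?_
  have hd : 1 + (α + 2 * n) - β = 1 + α - β + 2 * n := by ring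
  have hc : 2 + (α + 2 * n) - β = 2 + α - β + 2 * n := by ring
  have hx : 2 + (α + 2 * n) - 2 * β = 2 + α - 2 * β + 2 * n := by ring
  simp only [Function.comp_apply, summationDefect, div_eq_mul_inv, hd, hc, hx, Nat.cast_mul,
    Nat.cast_ofNat]

theorem summationDefect_eq_zero (hα : NotPole α) (hd : NotPole (1 + α - β))
    (hx : 0 < (2 + α - 2 * β).re) : summationDefect α β = 0 := by
  have hconst (n : ℕ) : summationDefect (α + 2 * n) β = summationDefect α β := by
    induction n with
    | zero => simp
    | succ n ih =>
      have hd' : NotPole (1 + (α + 2 * n) - β) := by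
        simpa [add_sub_right_comm, ← add_assoc] using hd.add_natCast (2 * n)
      have hx' : 0 < (2 + (α + 2 * n) - 2 * β).re := by
        simpa using re_parametricExcess_add_natCast_pos hx (2 * n)
      have hα' : NotPole (α + 2 * n) := by simpa using hα.add_natCast (2 * n)
      rw [← ih, summationDefect_add_two hα' hd' hx']
      congr 1
      push_cast
      ring
  exact tendsto_nhds_unique (tendsto_const_nhds.congr fun n => (hconst n).symm)
    (tendsto_summationDefect_add_two_mul α β)

theorem sub_one_mul_reducedF32_eq (hα : NotPole α) (hc : NotPole (2 + α - β))
    (hx : 0 < (2 + α - 2 * β).re) :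
    (β - 1) * reducedF32 α β (2 + α - β) =
      (1 + α - β) * (nielsenBeta (2 + α - 2 * β) - nielsenBeta α) := by
  have hα' : NotPole (α + 2) := by simpa using hα.add_natCast 2
  have hd : NotPole (1 + (α + 2) - β) := by
    rw [show 1 + (α + 2) - β = 2 + α - β + 1 by ring]
    exact hc.add_one
  have hx' : 0 < (2 + (α + 2) - 2 * β).re := by
    simpa using re_parametricExcess_add_natCast_pos hx 2
  rw [sub_one_mul_reducedF32_eq_add_summationDefect hα hc hx,
    summationDefect_eq_zero hα' hd hx', add_zero]

end WellPoised

theorem F32_summation_formula (α β : ℂ) (h : -2 < (α - 2 * β).re) (hβ : β ≠ 1)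
    (hl₁ : NotPole (1 + α)) (hl₂ : NotPole (2 + α - β))
    (hp₁ : NotPole α) (hp₂ : NotPole (2 + α - 2 * β))
    (hp₃ : NotPole ((α + 1) / 2)) (hp₄ : NotPole ((α + 3) / 2 - β)) :
    F32 1 α β (1 + α) (2 + α - β) =
      α * (1 + α - β) / (β - 1) *
        (digamma α - digamma (2 + α - 2 * β) - digamma ((α + 1) / 2) +
          digamma ((α + 3) / 2 - β)) := by
  have hx : 0 < (2 + α - 2 * β).re := by
    simp only [Complex.sub_re, Complex.add_re, Complex.re_ofNat] at h ⊢
    linarith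
  have hhalf : (2 + α - 2 * β + 1) / 2 = (α + 3) / 2 - β := by ring
  have hseries : reducedF32 α β (2 + α - β) =
      (1 + α - β) * (nielsenBeta (2 + α - 2 * β) - nielsenBeta α) / (β - 1) :=
    eq_div_of_mul_eq (sub_ne_zero.2 hβ)
      ((mul_comm _ _).trans (sub_one_mul_reducedF32_eq hp₁ hl₂ hx))
  rw [F32_one_self_add_one hp₁, hseries, nielsenBeta, nielsenBeta, hhalf]
  ring
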